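/- Let $n \geq 3$ and $0 < 2\rho < \rho_0 < \rho_1 < \rho_2 < 1$. Suppose $\tilde v \in C^2$ satisfies $-\Delta \tilde v = \tilde f \geq 0$ on the annulus $B_1(0) \setminus \bar B_\rho(0)$ and $\tilde v \geq 0$ on the boundary $\partial(B_1 \setminus B_\rho)$. Then there is a constant $C > 1$ depending only on $n, \rho_0, \rho_1, \rho_2$ such that $\inf_{\rho_1 \leq |x| \leq \rho_2} \tilde v(x) \geq \frac{1}{C} \int_{2\rho \leq |y| \leq \rho_0} \tilde f(y)\,dy$. -/

import Mathlib

open Metric Set MeasureTheory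

/-- The (flat) Laplacian, as the sum of the second partial derivatives. -/
noncomputable def lap {n : ℕ} (u : EuclideanSpace ℝ (Fin n) → ℝ)
    (x : EuclideanSpace ℝ (Fin n)) : ℝ :=
  ∑ i, fderiv ℝ (fun y => fderiv ℝ u y (EuclideanSpace.single i 1)) x
    (EuclideanSpace.single i 1)

/-!
Multiply `-Δ v = f` by a test function `φ` which is bounded below on `2ρ ≤ ‖y‖ ≤ ρ₀` and vanishes
for `‖y‖ ≤ 3ρ/2` and for `‖y‖ ≥ r`, where `r < 1`. If `φ` is the cube of the positive part of a
barrier that is subharmonic for `‖y‖ ≤ ρ₀`, then `-Δ φ` is positive only on the fixed annulus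
`ρ₀ ≤ ‖y‖ ≤ r`, where it is bounded independently of `ρ`. Green's second identity therefore bounds
`∫ f` by a multiple of `∫ v` over that annulus. By the minimum principle `v` is a nonnegative
superharmonic function, so the weak Harnack inequality, obtained by chaining mean value
inequalities, bounds the latter integral by a multiple of `v x`.

The barrier contains `(‖y‖² + ρ²)^(-1/2)` in place of the fundamental solution: it is smooth across
the origin and superharmonic in every dimension at least three.
-/

open Filter InnerProductSpace Module
open scoped Topology InnerProductSpace Laplacian Gradient

section PosPart

lemma hasDerivAt_posPart_pow (k : ℕ) (t : ℝ) :
    HasDerivAt (fun t : ℝ => t⁺ ^ (k + 2)) ((k + 2) * t⁺ ^ (k + 1)) t := by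
  rcases lt_trichotomy t 0 with ht | rfl | ht
  · have h_zero : (fun t : ℝ => t⁺ ^ (k + 2)) =ᶠ[𝓝 t] fun _ => 0 := by
      filter_upwards [Iio_mem_nhds ht] with s hs
      rw [posPart_of_nonpos (le_of_lt hs), zero_pow (by omega)]
    rw [posPart_of_nonpos ht.le, zero_pow (by omega), mul_zero]
    exact (hasDerivAt_const t 0).congr_of_eventuallyEq h_zero
  · have h_bigO : (fun t : ℝ => t⁺ ^ (k + 2)) =O[𝓝 0] fun t => ‖t - 0‖ ^ (k + 2) := by
      refine Asymptotics.isBigO_of_le _ fun s => ?_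
      rw [sub_zero, norm_pow, norm_pow, norm_norm, Real.norm_of_nonneg (posPart_nonneg s)]
      exact pow_le_pow_left₀ (posPart_nonneg s) (sup_le (le_abs_self s) (abs_nonneg s)) _
    simpa using (h_bigO.hasFDerivAt (𝕜 := ℝ) (by omega)).hasDerivAt
  · have h_pow : (fun t : ℝ => t⁺ ^ (k + 2)) =ᶠ[𝓝 t] fun t => t ^ (k + 2) := by
      filter_upwards [Ioi_mem_nhds ht] with s hs
      rw [posPart_of_nonneg (le_of_lt hs)]
    rw [posPart_of_nonneg ht.le]
    simpa using (hasDerivAt_pow (k + 2) t).congr_of_eventuallyEq h_pow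

lemma contDiff_posPart_pow (k : ℕ) : ContDiff ℝ k (fun t : ℝ => t⁺ ^ (k + 1)) := by
  induction k with
  | zero => simpa using (contDiff_zero (𝕜 := ℝ)).2 (continuous_posPart (α := ℝ))
  | succ k ih =>
    have h_deriv : deriv (fun t : ℝ => t⁺ ^ (k + 2))
        = fun t : ℝ => (k + 2 : ℝ) * t⁺ ^ (k + 1) :=
      funext fun t => (hasDerivAt_posPart_pow k t).deriv
    push_cast
    rw [contDiff_succ_iff_deriv, h_deriv]
    exact ⟨fun t => (hasDerivAt_posPart_pow k t).differentiableAt, by simp,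
      contDiff_const.mul ih⟩

end PosPart

lemma deriv_deriv_nonneg_of_isLocalMin {g : ℝ → ℝ} {a : ℝ} (hg : ContinuousAt g a)
    (hmin : IsLocalMin g a) : 0 ≤ deriv (deriv g) a := by
  by_contra! hneg
  -- A strict local maximum that is also a local minimum would make `g` locally constant.
  have hmax : IsLocalMax g a := isLocalMax_of_deriv_deriv_neg hneg hmin.deriv_eq_zero hg
  have hconst : g =ᶠ[𝓝 a] fun _ => g a := by
    filter_upwards [hmax, hmin] with t hle hge using le_antisymm hle hge
  simp [hconst.deriv.deriv_eq] at hneg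

section DirectionalDerivative

variable {E : Type*} [NormedAddCommGroup E] [NormedSpace ℝ E]

lemma contDiff_fderiv_apply {f : E → ℝ} (hf : ContDiff ℝ 2 f) (e : E) :
    ContDiff ℝ 1 (fun y => fderiv ℝ f y e) :=
  (hf.fderiv_right (m := 1) (by norm_num)).clm_apply contDiff_const

lemma contDiffAt_fderiv_apply {f : E → ℝ} {x : E} (hf : ContDiffAt ℝ 2 f x) (e : E) :
    ContDiffAt ℝ 1 (fun y => fderiv ℝ f y e) x :=
  (hf.fderiv_right (m := 1) (by norm_num)).clm_apply contDiffAt_const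

lemma eventually_differentiableAt {f : E → ℝ} {x : E} (hf : ContDiffAt ℝ 2 f x) :
    ∀ᶠ y in 𝓝 x, DifferentiableAt ℝ f y :=
  (hf.eventually (by simp)).mono fun _ hy => hy.differentiableAt (by norm_num)

lemma fderiv_fderiv_apply_nonneg_of_isLocalMin {f : E → ℝ} {x : E} (hf : ContDiffAt ℝ 2 f x)
    (hmin : IsLocalMin f x) (e : E) : 0 ≤ fderiv ℝ (fun y => fderiv ℝ f y e) x e := by
  have hline (t : ℝ) : HasDerivAt (fun t : ℝ => x + t • e) e t := by
    simpa using ((hasDerivAt_id t).smul_const e).const_add x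
  have htendsto : Tendsto (fun t : ℝ => x + t • e) (𝓝 0) (𝓝 x) := by
    simpa using (hline 0).continuousAt.tendsto
  have hderiv : deriv (fun t : ℝ => f (x + t • e)) =ᶠ[𝓝 0] fun t => fderiv ℝ f (x + t • e) e := by
    filter_upwards [htendsto.eventually (eventually_differentiableAt hf)] with t ht
    exact (ht.hasFDerivAt.comp_hasDerivAt t (hline t)).deriv
  have hderiv2 : deriv (deriv fun t : ℝ => f (x + t • e)) 0
      = fderiv ℝ (fun y => fderiv ℝ f y e) x e := by
    have h := (contDiffAt_fderiv_apply hf e).differentiableAt one_ne_zero |>.hasFDerivAt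
    rw [hderiv.deriv_eq]
    exact (h.comp_hasDerivAt_of_eq 0 (hline 0) (by simp)).deriv
  rw [← hderiv2]
  refine deriv_deriv_nonneg_of_isLocalMin ?_ ?_
  · exact ContinuousAt.comp_of_eq hf.continuousAt (hline 0).continuousAt (by simp)
  · simpa [IsLocalMin, IsMinFilter] using htendsto.eventually hmin

lemma integral_mul_fderiv_apply_eq_neg [FiniteDimensional ℝ E] [MeasurableSpace E] [BorelSpace E]
    (μ : Measure E) [μ.IsAddHaarMeasure] {a b : E → ℝ} (ha : ContDiff ℝ 1 a) (hb : ContDiff ℝ 1 b)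
    (hac : HasCompactSupport a) (e : E) :
    ∫ y, a y * fderiv ℝ b y e ∂μ = -∫ y, fderiv ℝ a y e * b y ∂μ := by
  have ha' : Continuous fun y => fderiv ℝ a y e :=
    (ha.continuous_fderiv one_ne_zero).clm_apply continuous_const
  have hb' : Continuous fun y => fderiv ℝ b y e :=
    (hb.continuous_fderiv one_ne_zero).clm_apply continuous_const
  exact integral_mul_fderiv_eq_neg_fderiv_mul_of_integrable
    ((ha'.mul hb.continuous).integrable_of_hasCompactSupport (hac.fderiv_apply ℝ e).mul_right)
    ((ha.continuous.mul hb').integrable_of_hasCompactSupport hac.mul_right)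
    ((ha.continuous.mul hb.continuous).integrable_of_hasCompactSupport hac.mul_right)
    (fun y _ => ha.differentiable one_ne_zero y) (fun y _ => hb.differentiable one_ne_zero y)

end DirectionalDerivative

section Laplacian

variable {E : Type*} [NormedAddCommGroup E] [InnerProductSpace ℝ E] [FiniteDimensional ℝ E]

lemma laplacian_eq_sum_fderiv_fderiv_apply {ι : Type*} [Fintype ι] (b : OrthonormalBasis ι ℝ E)
    {f : E → ℝ} {x : E} (hf : ContDiffAt ℝ 2 f x) :
    Δ f x = ∑ i, fderiv ℝ (fun y => fderiv ℝ f y (b i)) x (b i) := by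
  have hdiff : DifferentiableAt ℝ (fderiv ℝ f) x :=
    (hf.fderiv_right (m := 1) (by norm_num)).differentiableAt one_ne_zero
  simp [laplacian_eq_iteratedFDeriv_orthonormalBasis f b, iteratedFDeriv_two_apply,
    fderiv_clm_apply hdiff (differentiableAt_const _)]

lemma lap_eq_laplacian {n : ℕ} {u : EuclideanSpace ℝ (Fin n) → ℝ} {x : EuclideanSpace ℝ (Fin n)}
    (hu : ContDiffAt ℝ 2 u x) : lap u x = Δ u x := by
  simp [lap, laplacian_eq_sum_fderiv_fderiv_apply (EuclideanSpace.basisFun (Fin n) ℝ) hu]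

lemma continuous_laplacian {u : E → ℝ} (hu : ContDiff ℝ 2 u) : Continuous (Δ u) := by
  rw [laplacian_eq_iteratedFDeriv_stdOrthonormalBasis]
  have := hu.continuous_iteratedFDeriv'
  fun_prop

lemma laplacian_nonneg_of_isLocalMin {f : E → ℝ} {x : E} (hf : ContDiffAt ℝ 2 f x)
    (hmin : IsLocalMin f x) : 0 ≤ Δ f x := by
  rw [laplacian_eq_sum_fderiv_fderiv_apply (stdOrthonormalBasis ℝ E) hf]
  exact Finset.sum_nonneg fun i _ => fderiv_fderiv_apply_nonneg_of_isLocalMin hf hmin _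

lemma laplacian_comp {g g' : ℝ → ℝ} {g'' : ℝ} {w : E → ℝ} {x : E} (hw : ContDiffAt ℝ 2 w x)
    (hg : ∀ᶠ t in 𝓝 (w x), HasDerivAt g (g' t) t) (hg' : HasDerivAt g' g'' (w x))
    (hgw : ContDiffAt ℝ 2 (g ∘ w) x) :
    Δ (g ∘ w) x = g'' * ‖∇ w x‖ ^ 2 + g' (w x) * Δ w x := by
  set b := stdOrthonormalBasis ℝ E
  have hfirst (e : E) : (fun y => fderiv ℝ (g ∘ w) y e)
      =ᶠ[𝓝 x] fun y => g' (w y) * fderiv ℝ w y e := by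
    filter_upwards [hw.continuousAt.eventually hg, eventually_differentiableAt hw] with y hgy hwy
    simp [(hgy.comp_hasFDerivAt y hwy.hasFDerivAt).fderiv]
  have hsecond (e : E) : fderiv ℝ (fun y => fderiv ℝ (g ∘ w) y e) x e
      = g'' * ⟪∇ w x, e⟫_ℝ ^ 2 + g' (w x) * fderiv ℝ (fun y => fderiv ℝ w y e) x e := by
    have hg'w := hg'.comp_hasFDerivAt x (hw.differentiableAt two_ne_zero).hasFDerivAt
    have hdw := ((contDiffAt_fderiv_apply hw e).differentiableAt one_ne_zero).hasFDerivAt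
    rw [(hfirst e).fderiv_eq,
      HasFDerivAt.fderiv (f := fun y => g' (w y) * fderiv ℝ w y e) (hg'w.mul hdw)]
    simp only [Function.comp_apply, add_apply, smul_apply, smul_eq_mul, inner_gradient_left]
    ring
  rw [laplacian_eq_sum_fderiv_fderiv_apply b hgw, laplacian_eq_sum_fderiv_fderiv_apply b hw,
    ← b.sum_sq_inner_left, Finset.mul_sum, Finset.mul_sum, ← Finset.sum_add_distrib]
  exact Finset.sum_congr rfl fun i _ => hsecond (b i)

lemma hasGradientAt_norm_sq (x : E) : HasGradientAt (fun y : E => ‖y‖ ^ 2) ((2 : ℝ) • x) x := by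
  rw [hasGradientAt_iff_hasFDerivAt]
  refine (hasStrictFDerivAt_norm_sq x).hasFDerivAt.congr_fderiv ?_
  ext y
  simp

lemma laplacian_norm_sq (x : E) : Δ (fun y : E => ‖y‖ ^ 2) x = 2 * finrank ℝ E := by
  have hgrad (e : E) : (fun y => fderiv ℝ (fun y : E => ‖y‖ ^ 2) y e)
      = fun y => (2 • innerSL ℝ e) y := by
    ext y
    simp [real_inner_comm]
  rw [laplacian_eq_sum_fderiv_fderiv_apply (stdOrthonormalBasis ℝ E)
    (contDiff_norm_sq ℝ).contDiffAt]
  simp_rw [hgrad, ContinuousLinearMap.fderiv]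
  simp [mul_comm]

lemma laplacian_comp_norm_sq {g g' : ℝ → ℝ} {g'' : ℝ} {x : E}
    (hg : ∀ᶠ t in 𝓝 (‖x‖ ^ 2), HasDerivAt g (g' t) t) (hg' : HasDerivAt g' g'' (‖x‖ ^ 2))
    (hgn : ContDiffAt ℝ 2 (fun y : E => g (‖y‖ ^ 2)) x) :
    Δ (fun y : E => g (‖y‖ ^ 2)) x
      = 4 * ‖x‖ ^ 2 * g'' + 2 * finrank ℝ E * g' (‖x‖ ^ 2) := by
  have h := laplacian_comp (w := fun y : E => ‖y‖ ^ 2) (contDiff_norm_sq ℝ).contDiffAt hg hg' hgn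
  rw [laplacian_norm_sq, (hasGradientAt_norm_sq x).gradient, norm_smul,
    Real.norm_ofNat] at h
  exact h.trans (by ring)

lemma laplacian_comp_const_add_smul {u : E → ℝ} (hu : ContDiff ℝ 2 u) (x : E) (t : ℝ) (y : E) :
    Δ (fun y => u (x + t • y)) y = t ^ 2 * Δ u (x + t • y) := by
  have hfirst (g : E → ℝ) (y e : E) :
      fderiv ℝ (fun y => g (x + t • y)) y e = t * fderiv ℝ g (x + t • y) e := by
    rw [fderiv_comp_smul (f := fun y => g (x + y)), fderiv_comp_add_left]
    rfl
  rw [laplacian_eq_sum_fderiv_fderiv_apply (stdOrthonormalBasis ℝ E) (by fun_prop),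
    laplacian_eq_sum_fderiv_fderiv_apply (stdOrthonormalBasis ℝ E) hu.contDiffAt, Finset.mul_sum]
  refine Finset.sum_congr rfl fun i _ => ?_
  simp_rw [hfirst u]
  rw [fderiv_const_mul, _root_.smul_apply,
    hfirst fun z => fderiv ℝ u z (stdOrthonormalBasis ℝ E i)]
  · simp only [smul_eq_mul]
    ring
  · have := contDiff_fderiv_apply hu (stdOrthonormalBasis ℝ E i)
    fun_prop (disch := norm_num)

lemma hasCompactSupport_laplacian {u : E → ℝ} (hu : HasCompactSupport u) :
    HasCompactSupport (Δ u) :=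
  .intro hu fun y hy => by
    rw [(laplacian_congr_nhds (notMem_tsupport_iff_eventuallyEq.1 hy)).self_of_nhds]
    exact congr_fun (laplacian_const (c := (0 : ℝ))) y

variable [MeasurableSpace E] [BorelSpace E]

lemma integral_mul_laplacian_eq_sum {φ u : E → ℝ} (hφ : ContDiff ℝ 1 φ) (hu : ContDiff ℝ 2 u)
    (hφc : HasCompactSupport φ) {ι : Type*} [Fintype ι] (b : OrthonormalBasis ι ℝ E) :
    ∫ y, φ y * Δ u y = -∑ i, ∫ y, fderiv ℝ φ y (b i) * fderiv ℝ u y (b i) := by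
  have hint (i : ι) :
      Integrable fun y => φ y * fderiv ℝ (fun y => fderiv ℝ u y (b i)) y (b i) :=
    (hφ.continuous.mul (((contDiff_fderiv_apply hu (b i)).continuous_fderiv
      one_ne_zero).clm_apply continuous_const)).integrable_of_hasCompactSupport hφc.mul_right
  simp_rw [laplacian_eq_sum_fderiv_fderiv_apply b hu.contDiffAt, Finset.mul_sum]
  rw [integral_finsetSum _ fun i _ => hint i, ← Finset.sum_neg_distrib]
  exact Finset.sum_congr rfl fun i _ =>
    integral_mul_fderiv_apply_eq_neg volume hφ (contDiff_fderiv_apply hu (b i)) hφc (b i)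

lemma integral_mul_laplacian_eq_neg_integral_inner_gradient {φ u : E → ℝ} (hφ : ContDiff ℝ 1 φ)
    (hu : ContDiff ℝ 2 u) (hφc : HasCompactSupport φ) :
    ∫ y, φ y * Δ u y = -∫ y, ⟪∇ φ y, ∇ u y⟫_ℝ := by
  set b := stdOrthonormalBasis ℝ E
  have hint (i) : Integrable fun y => fderiv ℝ φ y (b i) * fderiv ℝ u y (b i) :=
    (((hφ.continuous_fderiv one_ne_zero).clm_apply continuous_const).mul
      (contDiff_fderiv_apply hu (b i)).continuous).integrable_of_hasCompactSupport
        (hφc.fderiv_apply ℝ (b i)).mul_right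
  have hsum (y : E) :
      ∑ i, fderiv ℝ φ y (b i) * fderiv ℝ u y (b i) = ⟪∇ φ y, ∇ u y⟫_ℝ := by
    rw [← b.sum_inner_mul_inner]
    simp only [real_inner_comm (∇ u y), inner_gradient_left]
  rw [integral_mul_laplacian_eq_sum hφ hu hφc b, ← integral_finsetSum _ fun i _ => hint i]
  simp_rw [hsum]

lemma integral_mul_laplacian_comm {φ u : E → ℝ} (hφ : ContDiff ℝ 2 φ) (hu : ContDiff ℝ 2 u)
    (hφc : HasCompactSupport φ) : ∫ y, φ y * Δ u y = ∫ y, Δ φ y * u y := by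
  set b := stdOrthonormalBasis ℝ E
  have hint (i) : Integrable fun y => fderiv ℝ (fun y => fderiv ℝ φ y (b i)) y (b i) * u y :=
    ((((contDiff_fderiv_apply hφ (b i)).continuous_fderiv one_ne_zero).clm_apply
      continuous_const).mul hu.continuous).integrable_of_hasCompactSupport
        ((hφc.fderiv_apply ℝ (b i)).fderiv_apply ℝ (b i)).mul_right
  rw [integral_mul_laplacian_eq_sum (hφ.of_le one_le_two) hu hφc b, ← Finset.sum_neg_distrib]
  simp_rw [laplacian_eq_sum_fderiv_fderiv_apply b hφ.contDiffAt, Finset.sum_mul]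
  rw [integral_finsetSum _ fun i _ => hint i]
  refine Finset.sum_congr rfl fun i _ => ?_
  rw [integral_mul_fderiv_apply_eq_neg volume (contDiff_fderiv_apply hφ (b i)) (hu.of_le one_le_two)
    (hφc.fderiv_apply ℝ (b i)), neg_neg]

end Laplacian

section MeanValue

variable {E : Type*} [NormedAddCommGroup E]

/-- The radial weight `(1 - ‖y‖²)₊ ^ k` on the unit ball. Since `∇ (ballWeight 2)` is
`-4 * ballWeight 1` times the radial vector field, the averages of a function over balls weighted
by `ballWeight 1` have radial derivatives that are averages of the Laplacian. -/
noncomputable def ballWeight (k : ℕ) (y : E) : ℝ :=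
  (1 - ‖y‖ ^ 2)⁺ ^ k

lemma ballWeight_nonneg (k : ℕ) (y : E) : 0 ≤ ballWeight k y :=
  pow_nonneg (posPart_nonneg _) k

lemma continuous_ballWeight (k : ℕ) : Continuous (ballWeight k : E → ℝ) := by
  have := continuous_posPart (α := ℝ)
  unfold ballWeight
  fun_prop

lemma ballWeight_eq_zero {k : ℕ} (hk : k ≠ 0) {y : E} (hy : 1 ≤ ‖y‖) : ballWeight k y = 0 := by
  rw [ballWeight, posPart_of_nonpos (by nlinarith), zero_pow hk]

lemma half_le_ballWeight_one {y : E} (hy : ‖y‖ ≤ 1 / 2) : 1 / 2 ≤ ballWeight 1 y := by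
  rw [ballWeight, pow_one]
  exact le_sup_of_le_left (by nlinarith [norm_nonneg y])

variable [InnerProductSpace ℝ E]

lemma contDiff_ballWeight (k : ℕ) : ContDiff ℝ k (ballWeight (k + 1) : E → ℝ) :=
  (contDiff_posPart_pow k).comp (contDiff_const.sub (contDiff_norm_sq ℝ))

variable [FiniteDimensional ℝ E]

lemma hasCompactSupport_ballWeight {k : ℕ} (hk : k ≠ 0) :
    HasCompactSupport (ballWeight k : E → ℝ) :=
  HasCompactSupport.intro (isCompact_closedBall (0 : E) 1) fun _ hy =>
    ballWeight_eq_zero hk (not_le.1 (mem_closedBall_zero_iff.not.1 hy)).le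

lemma gradient_ballWeight (k : ℕ) (y : E) :
    ∇ (ballWeight (k + 2)) y = (-(2 * (k + 2) * ballWeight (k + 1) y)) • y := by
  refine HasGradientAt.gradient ?_
  have h := (hasDerivAt_posPart_pow k (1 - ‖y‖ ^ 2)).comp_hasFDerivAt y
    ((hasGradientAt_norm_sq y).hasFDerivAt.const_sub 1)
  refine (hasGradientAt_iff_hasFDerivAt.2 (h.congr_fderiv ?_))
  ext e
  simp only [map_smul, smul_neg, neg_apply, smul_apply, toDual_apply_apply, smul_eq_mul, ballWeight,
    neg_smul, map_neg, neg_inj]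
  ring

/-- `u` is a nonnegative `C²` function on the whole space which is superharmonic on `U`. Regularity
and sign are required everywhere so that integrals of `u` need no localisation; a cutoff reduces
functions defined on part of the space to this case. -/
structure NonnegSuperharmonicOn (u : E → ℝ) (U : Set E) : Prop where
  contDiff : ContDiff ℝ 2 u
  nonneg : ∀ x, 0 ≤ u x
  laplacian_nonpos : ∀ x ∈ U, Δ u x ≤ 0

lemma NonnegSuperharmonicOn.mono {u : E → ℝ} {U V : Set E} (hu : NonnegSuperharmonicOn u V)
    (hUV : U ⊆ V) : NonnegSuperharmonicOn u U :=
  ⟨hu.contDiff, hu.nonneg, fun x hx => hu.laplacian_nonpos x (hUV hx)⟩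

variable [MeasurableSpace E] [BorelSpace E]

lemma integral_ballWeight_mul_fderiv {u : E → ℝ} (hu : ContDiff ℝ 2 u) (x : E) {t : ℝ}
    (ht : t ≠ 0) :
    4 * ∫ y, ballWeight 1 y * fderiv ℝ u (x + t • y) y
      = t * ∫ y, ballWeight 2 y * Δ u (x + t • y) := by
  have hgrad (y : E) : ⟪∇ (ballWeight 2) y, ∇ (fun y => u (x + t • y)) y⟫_ℝ
      = -(4 * t) * (ballWeight 1 y * fderiv ℝ u (x + t • y) y) := by
    rw [gradient_ballWeight 0, inner_smul_left, real_inner_comm, inner_gradient_left,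
      fderiv_comp_smul (f := fun y => u (x + y)), fderiv_comp_add_left]
    simp only [CharP.cast_eq_zero, zero_add, Real.ringHom_apply, smul_apply, smul_eq_mul, neg_mul,
      neg_inj]
    ring
  have hgreen := integral_mul_laplacian_eq_neg_integral_inner_gradient
    (contDiff_ballWeight 1) (u := fun y => u (x + t • y)) (by fun_prop)
    (hasCompactSupport_ballWeight two_ne_zero)
  simp_rw [hgrad, laplacian_comp_const_add_smul hu, mul_left_comm _ (t ^ 2)] at hgreen
  rw [integral_const_mul, integral_const_mul] at hgreen
  apply mul_left_cancel₀ ht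
  linear_combination -hgreen

lemma hasDerivAt_integral_ballWeight_mul {u : E → ℝ} (hu : ContDiff ℝ 1 u) (x : E) (t : ℝ) :
    HasDerivAt (fun t : ℝ => ∫ y, ballWeight 1 y * u (x + t • y))
      (∫ y, ballWeight 1 y * fderiv ℝ u (x + t • y) y) t := by
  have := continuous_ballWeight (E := E) 1
  have := hu.continuous_fderiv one_ne_zero
  have hcont (s : ℝ) : Continuous fun y => ballWeight 1 y * u (x + s • y) := by
    have := hu.continuous
    fun_prop
  have hcont' : Continuous fun p : ℝ × E => ballWeight 1 p.2 * fderiv ℝ u (x + p.1 • p.2) p.2 := by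
    fun_prop
  obtain ⟨M, hM⟩ := ((isCompact_closedBall t 1).prod
    (isCompact_closedBall (0 : E) 1)).exists_bound_of_continuousOn hcont'.continuousOn
  refine (hasDerivAt_integral_of_dominated_loc_of_deriv_le
    (F := fun t y => ballWeight 1 y * u (x + t • y))
    (F' := fun t y => ballWeight 1 y * fderiv ℝ u (x + t • y) y)
    (bound := (closedBall (0 : E) 1).indicator fun _ => M)
    (closedBall_mem_nhds t one_pos) (.of_forall fun s => (hcont s).aestronglyMeasurable)
    ((hcont t).integrable_of_hasCompactSupport
      (hasCompactSupport_ballWeight one_ne_zero).mul_right)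
    (hcont'.comp (Continuous.prodMk_right t)).aestronglyMeasurable
    (.of_forall fun y s hs => ?_) ?_ (.of_forall fun y s _ => ?_)).2
  · by_cases hy : y ∈ closedBall (0 : E) 1
    · simpa only [indicator_of_mem hy] using hM (s, y) ⟨hs, hy⟩
    · have hy' : 1 ≤ ‖y‖ := (not_le.1 (mem_closedBall_zero_iff.not.1 hy)).le
      simp [indicator_of_notMem hy, ballWeight_eq_zero one_ne_zero hy']
  · rw [integrable_indicator_iff measurableSet_closedBall]
    exact integrableOn_const measure_closedBall_lt_top.ne
  · have hline : HasDerivAt (fun s : ℝ => x + s • y) y s := by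
      simpa using ((hasDerivAt_id s).smul_const y).const_add x
    exact ((hu.differentiable one_ne_zero (x + s • y)).hasFDerivAt.comp_hasDerivAt s
      hline).const_mul _

lemma integral_ballWeight_mul_le {u : E → ℝ} (hu : ContDiff ℝ 2 u) {x : E} {R : ℝ} (hR : 0 ≤ R)
    (hΔ : ∀ z ∈ ball x R, Δ u z ≤ 0) :
    ∫ y, ballWeight 1 y * u (x + R • y) ≤ (∫ y : E, ballWeight 1 y) * u x := by
  have hderiv := hasDerivAt_integral_ballWeight_mul (hu.of_le one_le_two) x
  have hanti : AntitoneOn (fun t : ℝ => ∫ y, ballWeight 1 y * u (x + t • y)) (Icc 0 R) := by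
    refine antitoneOn_of_deriv_nonpos (convex_Icc 0 R)
      (fun t _ => (hderiv t).continuousAt.continuousWithinAt)
      (fun t _ => (hderiv t).differentiableAt.differentiableWithinAt) fun t ht => ?_
    obtain ⟨ht0, htR⟩ : 0 < t ∧ t < R := by simpa using ht
    have hlap : ∫ y, ballWeight 2 y * Δ u (x + t • y) ≤ 0 := by
      refine integral_nonpos fun y => ?_
      rcases le_or_gt 1 ‖y‖ with hy | hy
      · simp [ballWeight_eq_zero two_ne_zero hy]
      · refine mul_nonpos_of_nonneg_of_nonpos (ballWeight_nonneg 2 y) (hΔ _ ?_)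
        rw [mem_ball_iff_norm, add_sub_cancel_left, norm_smul, Real.norm_of_nonneg ht0.le]
        nlinarith
    rw [(hderiv t).deriv]
    linarith [integral_ballWeight_mul_fderiv hu x ht0.ne',
      mul_nonpos_of_nonneg_of_nonpos ht0.le hlap]
  simpa [integral_mul_const] using hanti (left_mem_Icc.2 hR) (right_mem_Icc.2 hR) hR

lemma setIntegral_ball_eq_integral_comp_smul (u : E → ℝ) (x : E) {R : ℝ} (hR : 0 < R) (σ : ℝ) :
    ∫ z in ball x (R * σ), u z = R ^ finrank ℝ E * ∫ y in ball 0 σ, u (x + R • y) := by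
  rw [Measure.setIntegral_comp_smul_of_pos volume (fun z => u (x + z)) _ hR,
    _root_.smul_ball hR.ne', smul_zero, Real.norm_of_nonneg hR.le, smul_eq_mul,
    mul_inv_cancel_left₀ (by positivity),
    ← (measurePreserving_add_left volume x).setIntegral_preimage_emb
      (measurableEmbedding_addLeft x), preimage_add_ball, sub_self]

lemma integrableOn_ball {u : E → ℝ} (hu : Continuous u) (x : E) (r : ℝ) :
    IntegrableOn u (ball x r) :=
  (hu.continuousOn.integrableOn_compact (isCompact_closedBall x r)).mono_set
    ball_subset_closedBall

lemma exists_setIntegral_ball_le_mul {σ : ℝ} (hσ : 0 < σ) :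
    ∃ C, 0 ≤ C ∧ ∀ (u : E → ℝ) (x : E), NonnegSuperharmonicOn u (ball x (2 * σ)) →
      ∫ z in ball x σ, u z ≤ C * u x := by
  have hweight : 0 ≤ ∫ y : E, ballWeight 1 y := integral_nonneg fun y => ballWeight_nonneg 1 y
  refine ⟨(2 * σ) ^ finrank ℝ E * (2 * ∫ y : E, ballWeight 1 y), by positivity,
    fun u x hu => ?_⟩
  have hcont : Continuous fun y => u (x + (2 * σ) • y) := by
    have := hu.contDiff.continuous
    fun_prop
  have hcont' : Integrable fun y => 2 * (ballWeight 1 y * u (x + (2 * σ) • y)) :=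
    (((continuous_ballWeight 1).mul hcont).integrable_of_hasCompactSupport
      (hasCompactSupport_ballWeight one_ne_zero).mul_right).const_mul 2
  calc ∫ z in ball x σ, u z
      = (2 * σ) ^ finrank ℝ E * ∫ y in ball (0 : E) (1 / 2), u (x + (2 * σ) • y) := by
        rw [← setIntegral_ball_eq_integral_comp_smul u x (by positivity)]
        ring_nf
    _ ≤ (2 * σ) ^ finrank ℝ E * ∫ y, 2 * (ballWeight 1 y * u (x + (2 * σ) • y)) := by
        gcongr
        refine (setIntegral_mono_on ?_ hcont'.integrableOn measurableSet_ball fun y hy => ?_).trans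
          (setIntegral_le_integral hcont' (.of_forall fun y => ?_))
        · exact integrableOn_ball hcont 0 (1 / 2)
        · have := half_le_ballWeight_one (by simpa using (mem_ball.1 hy).le)
          nlinarith [hu.nonneg (x + (2 * σ) • y)]
        · have := ballWeight_nonneg 1 y
          have := hu.nonneg (x + (2 * σ) • y)
          positivity
    _ ≤ (2 * σ) ^ finrank ℝ E * (2 * ∫ y : E, ballWeight 1 y) * u x := by
        rw [integral_const_mul, mul_assoc, mul_assoc 2]
        gcongr
        exact integral_ballWeight_mul_le hu.contDiff (by positivity) hu.laplacian_nonpos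

end MeanValue

section WeakHarnack

variable {E : Type*} [NormedAddCommGroup E] [InnerProductSpace ℝ E] [FiniteDimensional ℝ E]
  [MeasurableSpace E] [BorelSpace E]

lemma exists_setIntegral_ball_le_mul_apply {s : ℝ} (hs : 0 < s) :
    ∃ C, 0 ≤ C ∧ ∀ (u : E → ℝ) (x z : E), NonnegSuperharmonicOn u (ball x (8 * s)) →
      dist z x < 2 * s → ∫ w in ball x s, u w ≤ C * u z := by
  obtain ⟨C, hC, hmean⟩ := exists_setIntegral_ball_le_mul (E := E) (σ := 3 * s) (by positivity)
  refine ⟨C, hC, fun u x z hu hzx => ?_⟩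
  calc ∫ w in ball x s, u w
      ≤ ∫ w in ball z (3 * s), u w :=
        setIntegral_mono_set (integrableOn_ball hu.contDiff.continuous _ _) (.of_forall hu.nonneg)
          (ball_subset_ball' (by rw [dist_comm]; linarith)).eventuallyLE
    _ ≤ C * u z := hmean u z (hu.mono (ball_subset_ball' (by linarith)))

lemma exists_setIntegral_ball_le_mul_setIntegral_ball {s : ℝ} (hs : 0 < s) :
    ∃ C, 0 ≤ C ∧ ∀ (u : E → ℝ) (x y : E), NonnegSuperharmonicOn u (ball x (8 * s)) →
      dist x y < s → ∫ w in ball x s, u w ≤ C * ∫ w in ball y s, u w := by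
  obtain ⟨C, hC, hpoint⟩ := exists_setIntegral_ball_le_mul_apply (E := E) hs
  set V : ℝ := volume.real (ball (0 : E) s)
  have hV : 0 < V := ENNReal.toReal_pos (measure_ball_pos _ _ hs).ne' measure_ball_lt_top.ne
  refine ⟨C / V, by positivity, fun u x y hu hxy => ?_⟩
  have hVy : volume.real (ball y s) = V := by
    rw [Measure.real, Measure.addHaar_ball_center, ← Measure.real]
  rw [div_mul_eq_mul_div, le_div_iff₀' hV, ← hVy, ← smul_eq_mul, ← setIntegral_const,
    ← integral_const_mul]
  refine setIntegral_mono_on (integrableOn_const measure_ball_lt_top.ne)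
    ((integrableOn_ball hu.contDiff.continuous _ _).const_mul C) measurableSet_ball fun z hz => ?_
  refine hpoint u x z hu ?_
  linarith [dist_triangle_right z x y, mem_ball.1 hz]

-- Harnack chains: the comparison of nearby balls is propagated along `K` by connectedness.
lemma exists_setIntegral_ball_le_of_isPreconnected {K : Set E} (hK : IsPreconnected K) {s : ℝ}
    (hs : 0 < s) {x y : E} (hx : x ∈ K) (hy : y ∈ K) :
    ∃ C, 0 ≤ C ∧ ∀ u : E → ℝ, NonnegSuperharmonicOn u (thickening (8 * s) K) →
      ∫ w in ball x s, u w ≤ C * ∫ w in ball y s, u w := by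
  obtain ⟨C, hC, hnear⟩ := exists_setIntegral_ball_le_mul_setIntegral_ball (E := E) hs
  refine hK.induction₂' (fun x y => ∃ C, 0 ≤ C ∧ ∀ u : E → ℝ,
    NonnegSuperharmonicOn u (thickening (8 * s) K) →
      ∫ w in ball x s, u w ≤ C * ∫ w in ball y s, u w) (fun x hx => ?_) ?_ hx hy
  · filter_upwards [self_mem_nhdsWithin, mem_nhdsWithin_of_mem_nhds (ball_mem_nhds x hs)]
      with y hy hyx
    exact ⟨⟨C, hC, fun u hu => hnear u x y (hu.mono (ball_subset_thickening hx _))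
      (mem_ball'.1 hyx)⟩, ⟨C, hC, fun u hu => hnear u y x
        (hu.mono (ball_subset_thickening hy _)) hyx⟩⟩
  · rintro x y z - - - ⟨C₁, hC₁, hxy⟩ ⟨C₂, hC₂, hyz⟩
    refine ⟨C₁ * C₂, mul_nonneg hC₁ hC₂, fun u hu => (hxy u hu).trans ?_⟩
    rw [mul_assoc]
    exact mul_le_mul_of_nonneg_left (hyz u hu) hC₁

lemma setIntegral_union_le {α : Type*} [MeasurableSpace α] {μ : Measure α} {f : α → ℝ}
    {A B : Set α} (hf : 0 ≤ f) (hA : IntegrableOn f A μ) (hB : IntegrableOn f B μ) :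
    ∫ x in A ∪ B, f x ∂μ ≤ ∫ x in A, f x ∂μ + ∫ x in B, f x ∂μ := by
  rw [← integral_add_measure hA hB]
  exact integral_mono_measure (Measure.restrict_union_le A B) (.of_forall hf)
    (Integrable.add_measure hA hB)

lemma exists_setIntegral_le_mul_setIntegral_ball {K : Set E} (hK : IsCompact K)
    (hK' : IsPreconnected K) {s : ℝ} (hs : 0 < s) {x₀ : E} (hx₀ : x₀ ∈ K) :
    ∃ C, 0 ≤ C ∧ ∀ u : E → ℝ, NonnegSuperharmonicOn u (thickening (8 * s) K) →
      ∫ w in K, u w ≤ C * ∫ w in ball x₀ s, u w := by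
  have hint {u : E → ℝ} (hu : NonnegSuperharmonicOn u (thickening (8 * s) K)) (A : Set E) :
      IntegrableOn u (A ∩ K) :=
    (hu.contDiff.continuous.continuousOn.integrableOn_compact hK).mono_set inter_subset_right
  suffices h : ∃ C, 0 ≤ C ∧ ∀ u : E → ℝ, NonnegSuperharmonicOn u (thickening (8 * s) K) →
      ∫ w in K ∩ K, u w ≤ C * ∫ w in ball x₀ s, u w by simpa only [inter_self] using h
  refine hK.induction_on (p := fun A => ∃ C, 0 ≤ C ∧ ∀ u : E → ℝ,
    NonnegSuperharmonicOn u (thickening (8 * s) K) →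
      ∫ w in A ∩ K, u w ≤ C * ∫ w in ball x₀ s, u w) ⟨0, le_rfl, by simp⟩ ?_ ?_ fun y hy => ?_
  · rintro A B hAB ⟨C, hC, hB⟩
    refine ⟨C, hC, fun u hu => le_trans ?_ (hB u hu)⟩
    exact setIntegral_mono_set (hint hu B) (.of_forall hu.nonneg)
      (inter_subset_inter_left K hAB).eventuallyLE
  · rintro A B ⟨C₁, hC₁, hA⟩ ⟨C₂, hC₂, hB⟩
    refine ⟨C₁ + C₂, add_nonneg hC₁ hC₂, fun u hu => ?_⟩
    rw [union_inter_distrib_right, add_mul]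
    exact (setIntegral_union_le hu.nonneg (hint hu A) (hint hu B)).trans
      (add_le_add (hA u hu) (hB u hu))
  · obtain ⟨C, hC, hball⟩ := exists_setIntegral_ball_le_of_isPreconnected hK' hs hy hx₀
    refine ⟨ball y s, mem_nhdsWithin_of_mem_nhds (ball_mem_nhds y hs), C, hC, fun u hu => ?_⟩
    exact (setIntegral_mono_set (integrableOn_ball hu.contDiff.continuous _ _)
      (.of_forall hu.nonneg) inter_subset_left.eventuallyLE).trans (hball u hu)

lemma exists_setIntegral_ball_le_mul_of_isCompact {K : Set E} (hK : IsCompact K)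
    (hK' : IsPreconnected K) {s : ℝ} (hs : 0 < s) {x₀ : E} (hx₀ : x₀ ∈ K) :
    ∃ C, 0 ≤ C ∧ ∀ u : E → ℝ, NonnegSuperharmonicOn u (thickening (8 * s) K) →
      ∀ x ∈ K, ∫ w in ball x₀ s, u w ≤ C * u x := by
  obtain ⟨M, hM, hpoint⟩ := exists_setIntegral_ball_le_mul_apply (E := E) hs
  refine hK.induction_on (p := fun A => ∃ C, 0 ≤ C ∧ ∀ u : E → ℝ,
    NonnegSuperharmonicOn u (thickening (8 * s) K) →
      ∀ x ∈ A, ∫ w in ball x₀ s, u w ≤ C * u x) ⟨0, le_rfl, by simp⟩ ?_ ?_ fun y hy => ?_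
  · rintro A B hAB ⟨C, hC, hB⟩
    exact ⟨C, hC, fun u hu x hx => hB u hu x (hAB hx)⟩
  · rintro A B ⟨C₁, hC₁, hA⟩ ⟨C₂, hC₂, hB⟩
    refine ⟨C₁ + C₂, add_nonneg hC₁ hC₂, fun u hu x hx => ?_⟩
    have hux := hu.nonneg x
    rw [add_mul]
    rcases hx with hx | hx
    · exact (hA u hu x hx).trans (le_add_of_nonneg_right (mul_nonneg hC₂ hux))
    · exact (hB u hu x hx).trans (le_add_of_nonneg_left (mul_nonneg hC₁ hux))
  · obtain ⟨C, hC, hball⟩ := exists_setIntegral_ball_le_of_isPreconnected hK' hs hx₀ hy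
    refine ⟨ball y s, mem_nhdsWithin_of_mem_nhds (ball_mem_nhds y hs), C * M, mul_nonneg hC hM,
      fun u hu x hx => ?_⟩
    rw [mul_assoc]
    refine (hball u hu).trans (mul_le_mul_of_nonneg_left (hpoint u y x ?_ ?_) hC)
    · exact hu.mono (ball_subset_thickening hy _)
    · linarith [mem_ball.1 hx]

theorem exists_setIntegral_le_mul_of_isCompact {K U : Set E} (hK : IsCompact K)
    (hK' : IsPreconnected K) (hU : IsOpen U) (hKU : K ⊆ U) :
    ∃ C, 0 ≤ C ∧ ∀ u : E → ℝ, NonnegSuperharmonicOn u U →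
      ∀ x ∈ K, ∫ w in K, u w ≤ C * u x := by
  rcases K.eq_empty_or_nonempty with rfl | ⟨x₀, hx₀⟩
  · exact ⟨0, le_rfl, by simp⟩
  obtain ⟨δ, hδ, hδU⟩ := hK.exists_thickening_subset_open hU hKU
  have hU' : thickening (8 * (δ / 8)) K ⊆ U := by rwa [mul_div_cancel₀ δ (by norm_num)]
  obtain ⟨A, hA, hK_le⟩ :=
    exists_setIntegral_le_mul_setIntegral_ball hK hK' (s := δ / 8) (by positivity) hx₀
  obtain ⟨B, hB, hball_le⟩ :=
    exists_setIntegral_ball_le_mul_of_isCompact hK hK' (s := δ / 8) (by positivity) hx₀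
  refine ⟨A * B, mul_nonneg hA hB, fun u hu x hx => ?_⟩
  rw [mul_assoc]
  exact (hK_le u (hu.mono hU')).trans
    (mul_le_mul_of_nonneg_left (hball_le u (hu.mono hU') x hx) hA)

end WeakHarnack

section MinimumPrinciple

variable {E : Type*} [NormedAddCommGroup E] [InnerProductSpace ℝ E] [FiniteDimensional ℝ E]
  {Ω : Set E} {v : E → ℝ} {c : ℝ}

lemma le_of_laplacian_neg (hΩ : IsOpen Ω) (hΩb : Bornology.IsBounded Ω)
    (hvc : ContinuousOn v (closure Ω)) (hv : ContDiffOn ℝ 2 v Ω) (hΔ : ∀ x ∈ Ω, Δ v x < 0)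
    (hfr : ∀ x ∈ frontier Ω, c ≤ v x) {x : E} (hx : x ∈ closure Ω) : c ≤ v x := by
  obtain ⟨z, hz, hmin⟩ := hΩb.isCompact_closure.exists_isMinOn ⟨x, hx⟩ hvc
  refine le_trans (hfr z ⟨hz, fun hz_int => ?_⟩) (hmin hx)
  rw [hΩ.interior_eq] at hz_int
  have hΩz : Ω ∈ 𝓝 z := hΩ.mem_nhds hz_int
  exact (hΔ z hz_int).not_ge
    (laplacian_nonneg_of_isLocalMin (hv.contDiffAt hΩz)
      ((hmin.on_subset subset_closure).isLocalMin hΩz))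

lemma le_of_laplacian_nonpos [Nontrivial E] (hΩ : IsOpen Ω) (hΩb : Bornology.IsBounded Ω)
    (hvc : ContinuousOn v (closure Ω)) (hv : ContDiffOn ℝ 2 v Ω) (hΔ : ∀ x ∈ Ω, Δ v x ≤ 0)
    (hfr : ∀ x ∈ frontier Ω, c ≤ v x) {x : E} (hx : x ∈ closure Ω) : c ≤ v x := by
  obtain ⟨M, hM, hΩM⟩ := hΩb.closure.exists_pos_norm_le
  refine le_of_forall_pos_le_add fun ε hε => ?_
  obtain ⟨δ, hδ, hδM⟩ : ∃ δ > 0, δ * M ^ 2 = ε :=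
    ⟨ε / M ^ 2, by positivity, div_mul_cancel₀ ε (by positivity)⟩
  let w : E → ℝ := δ • fun y => ‖y‖ ^ 2
  have hw : ContDiff ℝ 2 w := (contDiff_norm_sq ℝ).const_smul δ
  have hw_pos (y : E) : 0 ≤ w y := mul_nonneg hδ.le (by positivity)
  have hw_le {y : E} (hy : y ∈ closure Ω) : w y ≤ ε :=
    (mul_le_mul_of_nonneg_left (pow_le_pow_left₀ (norm_nonneg y) (hΩM y hy) 2) hδ.le).trans_eq hδM
  have hΔw (y : E) : 0 < Δ w y := by
    rw [laplacian_smul δ (contDiff_norm_sq ℝ).contDiffAt, laplacian_norm_sq, smul_eq_mul]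
    have hE : (0 : ℝ) < finrank ℝ E := mod_cast finrank_pos
    positivity
  have hperturbed : c - ε ≤ (v - w) x := by
    refine le_of_laplacian_neg hΩ hΩb (hvc.sub hw.continuous.continuousOn)
      (hv.sub hw.contDiffOn) (fun y hy => ?_) (fun y hy => ?_) hx
    · rw [(hv.contDiffAt (hΩ.mem_nhds hy)).laplacian_sub hw.contDiffAt]
      exact sub_neg.2 ((hΔ y hy).trans_lt (hΔw y))
    · exact sub_le_sub (hfr y hy) (hw_le (frontier_subset_closure hy))
  exact sub_le_iff_le_add.1 (hperturbed.trans (sub_le_self _ (hw_pos x)))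

end MinimumPrinciple

section Cutoff

variable {E : Type*} [NormedAddCommGroup E] [NormedSpace ℝ E] [FiniteDimensional ℝ E]

lemma exists_contDiff_nonneg_eventuallyEq {U K : Set E} {v : E → ℝ} {m : ℕ} (hU : IsOpen U)
    (hK : IsClosed K) (hKU : K ⊆ U) (hv : ContDiffOn ℝ m v U) (hv_nonneg : ∀ x ∈ U, 0 ≤ v x) :
    ∃ u : E → ℝ, ContDiff ℝ m u ∧ (∀ x, 0 ≤ u x) ∧ u =ᶠ[𝓝ˢ K] v := by
  obtain ⟨χ, hχ_zero, hχ_one, hχ_mem⟩ := exists_contMDiffMap_zero_one_nhds_of_isClosed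
    (n := (m : ℕ∞)) (modelWithCornersSelf ℝ E) hU.isClosed_compl hK
    (disjoint_compl_left_iff_subset.2 hKU)
  refine ⟨fun x => χ x * v x, contDiff_iff_contDiffAt.2 fun x => ?_, fun x => ?_, ?_⟩
  · by_cases hx : x ∈ U
    · exact χ.contMDiff.contDiff.contDiffAt.mul (hv.contDiffAt (hU.mem_nhds hx))
    · refine (contDiffAt_const (c := (0 : ℝ))).congr_of_eventuallyEq ?_
      filter_upwards [eventually_nhdsSet_iff_forall.1 hχ_zero x hx] with y hy
      rw [hy, zero_mul]
  · change 0 ≤ χ x * v x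
    by_cases hx : x ∈ U
    · exact mul_nonneg (hχ_mem x).1 (hv_nonneg x hx)
    · rw [(eventually_nhdsSet_iff_forall.1 hχ_zero x hx).self_of_nhds, zero_mul]
  · filter_upwards [hχ_one] with x hx
    rw [hx, one_mul]

end Cutoff

section Annulus

/-- The closed annulus with inner radius `a` and outer radius `b` centred at the origin. -/
def closedAnnulus (E : Type*) [NormedAddCommGroup E] (a b : ℝ) : Set E :=
  {y | a ≤ ‖y‖ ∧ ‖y‖ ≤ b}

variable {E : Type*} [NormedAddCommGroup E]

lemma isCompact_closedAnnulus [ProperSpace E] (a b : ℝ) : IsCompact (closedAnnulus E a b) := by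
  refine (isCompact_closedBall (0 : E) b).of_isClosed_subset ?_ fun y hy => ?_
  · exact (isClosed_le continuous_const continuous_norm).inter
      (isClosed_le continuous_norm continuous_const)
  · exact mem_closedBall_zero_iff.2 hy.2

lemma isPreconnected_closedAnnulus [NormedSpace ℝ E] (hE : 1 < Module.rank ℝ E) {a : ℝ}
    (ha : 0 < a) (b : ℝ) : IsPreconnected (closedAnnulus E a b) := by
  have hpolar : closedAnnulus E a b = (fun p : E × ℝ => p.2 • p.1) '' sphere 0 1 ×ˢ Icc a b := by
    ext y
    constructor
    · intro hy
      have hy_pos : 0 < ‖y‖ := ha.trans_le hy.1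
      refine ⟨(‖y‖⁻¹ • y, ‖y‖), ⟨?_, hy⟩, smul_inv_smul₀ hy_pos.ne' y⟩
      rw [mem_sphere_zero_iff_norm, norm_smul, norm_inv, norm_norm, inv_mul_cancel₀ hy_pos.ne']
    · rintro ⟨⟨z, t⟩, ⟨hz, ht⟩, rfl⟩
      have hnorm : ‖t • z‖ = t := by
        rw [norm_smul, mem_sphere_zero_iff_norm.1 hz, mul_one,
          Real.norm_of_nonneg (ha.le.trans ht.1)]
      exact ⟨hnorm.symm ▸ ht.1, hnorm.symm ▸ ht.2⟩
  rw [hpolar]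
  exact ((isPreconnected_sphere hE 0 1).prod isPreconnected_Icc).image _ (by fun_prop)

lemma mem_ball_sdiff_closedBall_zero {a b : ℝ} {y : E} :
    y ∈ ball (0 : E) b \ closedBall 0 a ↔ a < ‖y‖ ∧ ‖y‖ < b := by
  rw [Set.mem_sdiff, mem_ball_zero_iff, mem_closedBall_zero_iff, not_le, and_comm]

end Annulus

section RadialLaplacian

variable {E : Type*} [NormedAddCommGroup E] [InnerProductSpace ℝ E]

lemma contDiff_rpow_norm_sq_add {m : ℕ} {c : ℝ} (hc : 0 < c) (p : ℝ) :
    ContDiff ℝ m fun y : E => (‖y‖ ^ 2 + c) ^ p :=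
  ((contDiff_norm_sq ℝ).add contDiff_const).rpow_const_of_ne fun y => by positivity

lemma contDiff_posPart_norm_sq_sub_pow (a : ℝ) (k : ℕ) :
    ContDiff ℝ k fun y : E => (‖y‖ ^ 2 - a)⁺ ^ (k + 1) :=
  (contDiff_posPart_pow k).comp ((contDiff_norm_sq ℝ).sub contDiff_const)

variable [FiniteDimensional ℝ E]

lemma laplacian_rpow_norm_sq_add {c : ℝ} (hc : 0 < c) (p : ℝ) (x : E) :
    Δ (fun y : E => (‖y‖ ^ 2 + c) ^ p) x =
      2 * p * (‖x‖ ^ 2 + c) ^ (p - 2) *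
        ((2 * (p - 1) + finrank ℝ E) * ‖x‖ ^ 2 + finrank ℝ E * c) := by
  have hderiv (p : ℝ) {q : ℝ} (hq : 0 < q + c) :
      HasDerivAt (fun q => (q + c) ^ p) (p * (q + c) ^ (p - 1)) q := by
    simpa using ((hasDerivAt_id q).add_const c).rpow_const (p := p) (.inl hq.ne')
  have hx : 0 < ‖x‖ ^ 2 + c := by positivity
  have hnear : ∀ᶠ q in 𝓝 (‖x‖ ^ 2), 0 < q + c :=
    (continuous_id.add continuous_const).continuousAt.eventually_const_lt hx
  rw [laplacian_comp_norm_sq (hnear.mono fun q hq => hderiv p hq)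
    ((hderiv (p - 1) hx).const_mul p) (contDiff_rpow_norm_sq_add hc p).contDiffAt,
    show p - 1 - 1 = p - 2 by ring, show p - 1 = p - 2 + 1 by ring, Real.rpow_add_one hx.ne']
  ring

lemma laplacian_rpow_neg_half_norm_sq_add_nonpos (hE : 3 ≤ finrank ℝ E) {c : ℝ} (hc : 0 < c)
    (x : E) : Δ (fun y : E => (‖y‖ ^ 2 + c) ^ (-(1 / 2) : ℝ)) x ≤ 0 := by
  rw [laplacian_rpow_norm_sq_add hc]
  have hE' : (3 : ℝ) ≤ finrank ℝ E := mod_cast hE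
  refine mul_nonpos_of_nonpos_of_nonneg ?_ ?_
  · have hpow : 0 ≤ (‖x‖ ^ 2 + c) ^ (-(1 / 2) - 2 : ℝ) := by positivity
    linarith
  · have hcoeff : 0 ≤ (2 * (-(1 / 2) - 1) + finrank ℝ E : ℝ) := by linarith
    positivity

lemma laplacian_posPart_norm_sq_sub_cube (a : ℝ) (x : E) :
    Δ (fun y : E => (‖y‖ ^ 2 - a)⁺ ^ 3) x =
      24 * ‖x‖ ^ 2 * (‖x‖ ^ 2 - a)⁺ + 6 * finrank ℝ E * (‖x‖ ^ 2 - a)⁺ ^ 2 := by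
  have hderiv (k : ℕ) (q : ℝ) :
      HasDerivAt (fun q => (q - a)⁺ ^ (k + 2)) ((k + 2) * (q - a)⁺ ^ (k + 1)) q :=
    (hasDerivAt_posPart_pow k (q - a)).comp_sub_const q a
  rw [laplacian_comp_norm_sq (.of_forall (hderiv 1)) ((hderiv 0 _).const_mul _)
    (contDiff_posPart_norm_sq_sub_pow a 2).contDiffAt]
  push_cast
  ring

end RadialLaplacian

section AnnulusBarrier

variable {E : Type*} [NormedAddCommGroup E] {ρ r₀ r : ℝ} {y : E}

/-- A barrier on the annulus `ρ < ‖y‖ < r`, subharmonic for `‖y‖ ≤ r₀` in dimension at least three.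
The term in `ρ` makes it negative near the inner sphere, uniformly in `ρ`; the cubic term, which
vanishes for `‖y‖ ≤ r₀`, makes it negative from the outer sphere on. -/
noncomputable def annulusBarrier (ρ r₀ r : ℝ) (y : E) : ℝ :=
  1 - 2 * ρ / √(‖y‖ ^ 2 + ρ ^ 2) - ((‖y‖ ^ 2 - r₀ ^ 2)⁺ / (r ^ 2 - r₀ ^ 2)) ^ 3

lemma annulusBarrier_eq (ρ r₀ r : ℝ) :
    (annulusBarrier ρ r₀ r : E → ℝ) = (fun _ => 1) -
      (2 * ρ) • (fun y => (‖y‖ ^ 2 + ρ ^ 2) ^ (-(1 / 2) : ℝ)) -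
      ((r ^ 2 - r₀ ^ 2) ^ 3)⁻¹ • fun y => (‖y‖ ^ 2 - r₀ ^ 2)⁺ ^ 3 := by
  ext y
  rw [annulusBarrier, Real.sqrt_eq_rpow, div_eq_mul_inv, ← Real.rpow_neg (by positivity), div_pow,
    div_eq_inv_mul _ ((r ^ 2 - r₀ ^ 2) ^ 3)]
  rfl

lemma annulusBarrier_le_one (hρ : 0 ≤ ρ) (hr₀ : 0 ≤ r₀) (hr : r₀ ≤ r) (y : E) :
    annulusBarrier ρ r₀ r y ≤ 1 := by
  have hr_sq : 0 ≤ r ^ 2 - r₀ ^ 2 := sub_nonneg.2 (pow_le_pow_left₀ hr₀ hr 2)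
  have hinner : 0 ≤ 2 * ρ / √(‖y‖ ^ 2 + ρ ^ 2) := by positivity
  have houter : 0 ≤ ((‖y‖ ^ 2 - r₀ ^ 2)⁺ / (r ^ 2 - r₀ ^ 2)) ^ 3 := by positivity
  rw [annulusBarrier]
  linarith

lemma annulusBarrier_nonpos_of_norm_le (hρ : 0 < ρ) (hr₀ : 0 ≤ r₀) (hr : r₀ ≤ r)
    (hy : ‖y‖ ≤ 3 / 2 * ρ) : annulusBarrier ρ r₀ r y ≤ 0 := by
  have hr_sq : 0 ≤ r ^ 2 - r₀ ^ 2 := sub_nonneg.2 (pow_le_pow_left₀ hr₀ hr 2)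
  have hinner : 1 ≤ 2 * ρ / √(‖y‖ ^ 2 + ρ ^ 2) := by
    rw [one_le_div (by positivity), Real.sqrt_le_left (by positivity)]
    linarith [pow_le_pow_left₀ (norm_nonneg y) hy 2, sq_pos_of_pos hρ]
  have houter : 0 ≤ ((‖y‖ ^ 2 - r₀ ^ 2)⁺ / (r ^ 2 - r₀ ^ 2)) ^ 3 := by positivity
  rw [annulusBarrier]
  linarith

lemma annulusBarrier_nonpos_of_le_norm (hρ : 0 ≤ ρ) (hr₀ : 0 ≤ r₀) (hr : r₀ < r)
    (hy : r ≤ ‖y‖) : annulusBarrier ρ r₀ r y ≤ 0 := by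
  have hr_sq : 0 < r ^ 2 - r₀ ^ 2 := sub_pos.2 (pow_lt_pow_left₀ hr hr₀ two_ne_zero)
  have hinner : 0 ≤ 2 * ρ / √(‖y‖ ^ 2 + ρ ^ 2) := by positivity
  have houter : 1 ≤ ((‖y‖ ^ 2 - r₀ ^ 2)⁺ / (r ^ 2 - r₀ ^ 2)) ^ 3 := by
    refine one_le_pow₀ ((one_le_div hr_sq).2 (le_trans ?_ (le_posPart _)))
    exact sub_le_sub_right (pow_le_pow_left₀ (hr₀.trans hr.le) hy 2) _
  rw [annulusBarrier]
  linarith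

lemma one_div_ten_le_annulusBarrier (hρ : 0 < ρ) (r : ℝ) (hy : y ∈ closedAnnulus E (2 * ρ) r₀) :
    1 / 10 ≤ annulusBarrier ρ r₀ r y := by
  have hinner : 2 * ρ / √(‖y‖ ^ 2 + ρ ^ 2) ≤ 9 / 10 := by
    rw [div_le_iff₀ (by positivity), ← div_le_iff₀' (by norm_num)]
    refine Real.le_sqrt_of_sq_le ?_
    linarith [pow_le_pow_left₀ (by positivity) hy.1 2, sq_pos_of_pos hρ]
  have houter : (‖y‖ ^ 2 - r₀ ^ 2)⁺ = 0 :=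
    posPart_of_nonpos (sub_nonpos.2 (pow_le_pow_left₀ (norm_nonneg y) hy.2 2))
  rw [annulusBarrier, houter, zero_div, zero_pow three_ne_zero]
  linarith

/-- The test function in the second Green identity. The cube keeps the positive part of the barrier
`C²`. -/
noncomputable def annulusTest (ρ r₀ r : ℝ) (y : E) : ℝ :=
  (annulusBarrier ρ r₀ r y)⁺ ^ 3

lemma annulusTest_nonneg (ρ r₀ r : ℝ) (y : E) : 0 ≤ annulusTest ρ r₀ r y :=
  pow_nonneg (posPart_nonneg _) 3

lemma annulusTest_eq_zero_of_norm_le (hρ : 0 < ρ) (hr₀ : 0 ≤ r₀) (hr : r₀ ≤ r)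
    (hy : ‖y‖ ≤ 3 / 2 * ρ) : annulusTest ρ r₀ r y = 0 := by
  rw [annulusTest, posPart_of_nonpos (annulusBarrier_nonpos_of_norm_le hρ hr₀ hr hy),
    zero_pow three_ne_zero]

lemma annulusTest_eq_zero_of_le_norm (hρ : 0 ≤ ρ) (hr₀ : 0 ≤ r₀) (hr : r₀ < r)
    (hy : r ≤ ‖y‖) : annulusTest ρ r₀ r y = 0 := by
  rw [annulusTest, posPart_of_nonpos (annulusBarrier_nonpos_of_le_norm hρ hr₀ hr hy),
    zero_pow three_ne_zero]

lemma hasCompactSupport_annulusTest [ProperSpace E] (hρ : 0 ≤ ρ) (hr₀ : 0 ≤ r₀) (hr : r₀ < r) :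
    HasCompactSupport (annulusTest ρ r₀ r : E → ℝ) :=
  .intro (isCompact_closedBall 0 r) fun _ hy =>
    annulusTest_eq_zero_of_le_norm hρ hr₀ hr (not_le.1 (mt mem_closedBall_zero_iff.2 hy)).le

lemma one_div_thousand_le_annulusTest (hρ : 0 < ρ) (r : ℝ)
    (hy : y ∈ closedAnnulus E (2 * ρ) r₀) : 1 / 1000 ≤ annulusTest ρ r₀ r y :=
  calc (1 / 1000 : ℝ) = (1 / 10) ^ 3 := by norm_num
    _ ≤ annulusTest ρ r₀ r y := pow_le_pow_left₀ (by norm_num)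
      ((one_div_ten_le_annulusBarrier hρ r hy).trans (le_posPart _)) 3

end AnnulusBarrier

section LaplacianBarrier

variable {E : Type*} [NormedAddCommGroup E] [InnerProductSpace ℝ E] {ρ r₀ r : ℝ}

lemma contDiff_annulusBarrier (hρ : 0 < ρ) (r₀ r : ℝ) :
    ContDiff ℝ 2 (annulusBarrier ρ r₀ r : E → ℝ) := by
  rw [annulusBarrier_eq]
  have hinner := (contDiff_rpow_norm_sq_add (E := E) (m := 2) (sq_pos_of_pos hρ) (-(1 / 2)))
  have houter := (contDiff_posPart_norm_sq_sub_pow (E := E) (r₀ ^ 2) 2)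
  exact (contDiff_const.sub (contDiff_const.smul hinner)).sub (contDiff_const.smul houter)

lemma contDiff_annulusTest (hρ : 0 < ρ) (r₀ r : ℝ) :
    ContDiff ℝ 2 (annulusTest ρ r₀ r : E → ℝ) :=
  (contDiff_posPart_pow 2).comp (contDiff_annulusBarrier hρ r₀ r)

variable [FiniteDimensional ℝ E]

lemma le_laplacian_annulusBarrier (hE : 3 ≤ finrank ℝ E) (hρ : 0 < ρ) (r₀ r : ℝ) (y : E) :
    -((24 * ‖y‖ ^ 2 * (‖y‖ ^ 2 - r₀ ^ 2)⁺ + 6 * finrank ℝ E * (‖y‖ ^ 2 - r₀ ^ 2)⁺ ^ 2) /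
      (r ^ 2 - r₀ ^ 2) ^ 3) ≤ (Δ (annulusBarrier ρ r₀ r : E → ℝ)) y := by
  set f : E → ℝ := fun y => (‖y‖ ^ 2 + ρ ^ 2) ^ (-(1 / 2) : ℝ)
  set g : E → ℝ := fun y => (‖y‖ ^ 2 - r₀ ^ 2)⁺ ^ 3 with hg_def
  set c := ((r ^ 2 - r₀ ^ 2) ^ 3)⁻¹
  have hf : ContDiffAt ℝ 2 f y := (contDiff_rpow_norm_sq_add (sq_pos_of_pos hρ) _).contDiffAt
  have hg : ContDiffAt ℝ 2 g y := (contDiff_posPart_norm_sq_sub_pow (r₀ ^ 2) 2).contDiffAt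
  have hcf : ContDiffAt ℝ 2 ((2 * ρ) • f) y := hf.const_smul (2 * ρ)
  have hcg : ContDiffAt ℝ 2 (c • g) y := hg.const_smul c
  have hΔf : 2 * ρ * Δ f y ≤ 0 := mul_nonpos_of_nonneg_of_nonpos (by positivity)
    (laplacian_rpow_neg_half_norm_sq_add_nonpos hE (sq_pos_of_pos hρ) y)
  have hone : ContDiffAt ℝ 2 (fun _ : E => (1 : ℝ)) y := contDiffAt_const
  have hdecomp : (annulusBarrier ρ r₀ r : E → ℝ) = (fun _ => 1) - (2 * ρ) • f - c • g :=
    annulusBarrier_eq ρ r₀ r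
  have hone_sub : ContDiffAt ℝ 2 ((fun _ => 1) - (2 * ρ) • f) y := hone.sub hcf
  rw [hdecomp, hone_sub.laplacian_sub hcg, hone.laplacian_sub hcf, laplacian_const,
    laplacian_smul _ hf, laplacian_smul _ hg, hg_def, laplacian_posPart_norm_sq_sub_cube,
    smul_eq_mul, smul_eq_mul, div_eq_inv_mul, Pi.zero_apply]
  linarith

lemma neg_laplacian_annulusTest_le (hE : 3 ≤ finrank ℝ E) (hρ : 0 < ρ) (r₀ r : ℝ) (y : E) :
    -Δ (annulusTest ρ r₀ r : E → ℝ) y ≤ 3 * (annulusBarrier ρ r₀ r y)⁺ ^ 2 *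
      ((24 * ‖y‖ ^ 2 * (‖y‖ ^ 2 - r₀ ^ 2)⁺ + 6 * finrank ℝ E * (‖y‖ ^ 2 - r₀ ^ 2)⁺ ^ 2) /
        (r ^ 2 - r₀ ^ 2) ^ 3) := by
  have hchain := laplacian_comp (x := y) (contDiff_annulusBarrier hρ r₀ r).contDiffAt
    (.of_forall (hasDerivAt_posPart_pow 1)) ((hasDerivAt_posPart_pow 0 _).const_mul _)
    (contDiff_annulusTest hρ r₀ r).contDiffAt
  have hgrad : 0 ≤ 6 * (annulusBarrier ρ r₀ r y)⁺ * ‖∇ (annulusBarrier ρ r₀ r) y‖ ^ 2 := by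
    have := posPart_nonneg (annulusBarrier ρ r₀ r y)
    positivity
  have hbarrier := mul_le_mul_of_nonneg_left (le_laplacian_annulusBarrier hE hρ r₀ r y)
    (by positivity : 0 ≤ 3 * (annulusBarrier ρ r₀ r y)⁺ ^ 2)
  have hΔ : Δ (annulusTest ρ r₀ r : E → ℝ) y =
      6 * (annulusBarrier ρ r₀ r y)⁺ * ‖∇ (annulusBarrier ρ r₀ r) y‖ ^ 2 +
        3 * (annulusBarrier ρ r₀ r y)⁺ ^ 2 * (Δ (annulusBarrier ρ r₀ r : E → ℝ)) y := by
    refine hchain.trans ?_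
    push_cast
    ring
  rw [hΔ]
  linarith

lemma exists_neg_laplacian_annulusTest_le (hE : 3 ≤ finrank ℝ E) (hr₀ : 0 ≤ r₀) (hr : r₀ < r) :
    ∃ C, 0 ≤ C ∧ ∀ ρ, 0 < ρ → ∀ y : E,
      -(Δ (annulusTest ρ r₀ r : E → ℝ)) y ≤ (closedAnnulus E r₀ r).indicator (fun _ => C) y := by
  set D := r ^ 2 - r₀ ^ 2
  have hD : 0 < D := sub_pos.2 (pow_lt_pow_left₀ hr hr₀ two_ne_zero)
  refine ⟨3 * ((24 * r ^ 2 * D + 6 * finrank ℝ E * D ^ 2) / D ^ 3), by positivity,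
    fun ρ hρ y => (neg_laplacian_annulusTest_le hE hρ r₀ r y).trans ?_⟩
  rcases lt_or_ge ‖y‖ r₀ with hy | hy₀
  · rw [indicator_of_notMem fun h => h.1.not_gt hy, posPart_of_nonpos (a := ‖y‖ ^ 2 - r₀ ^ 2)
      (sub_nonpos.2 (pow_le_pow_left₀ (norm_nonneg y) hy.le 2))]
    simp
  rcases lt_or_ge r ‖y‖ with hy | hyr
  · rw [indicator_of_notMem fun h => h.2.not_gt hy,
      posPart_of_nonpos (annulusBarrier_nonpos_of_le_norm hρ.le hr₀ hr hy.le)]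
    simp
  · rw [indicator_of_mem (show y ∈ closedAnnulus E r₀ r from ⟨hy₀, hyr⟩)]
    have hbarrier : (annulusBarrier ρ r₀ r y)⁺ ^ 2 ≤ 1 :=
      pow_le_one₀ (posPart_nonneg _)
        (sup_le (annulusBarrier_le_one hρ.le hr₀ hr.le y) zero_le_one)
    have hyr_sq : ‖y‖ ^ 2 ≤ r ^ 2 := pow_le_pow_left₀ (norm_nonneg y) hyr 2
    have hposPart : (‖y‖ ^ 2 - r₀ ^ 2)⁺ ≤ D := sup_le (sub_le_sub_right hyr_sq _) hD.le
    gcongr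
    exact mul_le_of_le_one_right (by norm_num) hbarrier

end LaplacianBarrier

section AnnulusEstimate

variable {E : Type*} [NormedAddCommGroup E] [InnerProductSpace ℝ E] [FiniteDimensional ℝ E]
  {ρ r₀ r R : ℝ}

lemma exists_nonnegSuperharmonicOn_eventuallyEq {Ω K : Set E} {v : E → ℝ} (hΩ : IsOpen Ω)
    (hK : IsClosed K) (hKΩ : K ⊆ Ω) (hv : ContDiffOn ℝ 2 v Ω) (hv_nonneg : ∀ x ∈ Ω, 0 ≤ v x)
    (hΔ : ∀ x ∈ Ω, Δ v x ≤ 0) :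
    ∃ u : E → ℝ, NonnegSuperharmonicOn u K ∧ u =ᶠ[𝓝ˢ K] v := by
  obtain ⟨u, hu, hu_nonneg, huv⟩ :=
    exists_contDiff_nonneg_eventuallyEq (m := 2) hΩ hK hKΩ hv hv_nonneg
  refine ⟨u, ⟨hu, hu_nonneg, fun x hx => ?_⟩, huv⟩
  rw [(laplacian_congr_nhds (eventually_nhdsSet_iff_forall.1 huv x hx)).self_of_nhds]
  exact hΔ x (hKΩ hx)

lemma annulusTest_mul_neg_laplacian_nonneg (hρ : 0 < ρ) (hr₀ : 0 ≤ r₀) (hr : r₀ < r) {u : E → ℝ}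
    (hu : NonnegSuperharmonicOn u (ball 0 r \ closedBall 0 (3 / 2 * ρ))) (y : E) :
    0 ≤ annulusTest ρ r₀ r y * -Δ u y := by
  rcases le_or_gt ‖y‖ (3 / 2 * ρ) with hy | hyρ
  · rw [annulusTest_eq_zero_of_norm_le hρ hr₀ hr.le hy, zero_mul]
  rcases le_or_gt r ‖y‖ with hy | hyr
  · rw [annulusTest_eq_zero_of_le_norm hρ.le hr₀ hr hy, zero_mul]
  · exact mul_nonneg (annulusTest_nonneg ρ r₀ r y)
      (neg_nonneg.2 (hu.laplacian_nonpos y (mem_ball_sdiff_closedBall_zero.2 ⟨hyρ, hyr⟩)))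

variable [MeasurableSpace E] [BorelSpace E]

lemma setIntegral_neg_laplacian_le_integral_annulusTest_mul (hρ : 0 < ρ) (hr₀ : 0 ≤ r₀)
    (hr : r₀ < r) {u : E → ℝ}
    (hu : NonnegSuperharmonicOn u (ball 0 r \ closedBall 0 (3 / 2 * ρ))) :
    ∫ y in closedAnnulus E (2 * ρ) r₀, -Δ u y ≤ 1000 * ∫ y, annulusTest ρ r₀ r y * -Δ u y := by
  have hΔu : Continuous fun y => -Δ u y := (continuous_laplacian hu.contDiff).neg
  have hint : Integrable fun y => 1000 * (annulusTest ρ r₀ r y * -Δ u y) :=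
    (((contDiff_annulusTest hρ r₀ r).continuous.mul hΔu).integrable_of_hasCompactSupport
      (hasCompactSupport_annulusTest hρ.le hr₀ hr).mul_right).const_mul 1000
  have hA := isCompact_closedAnnulus (E := E) (2 * ρ) r₀
  calc ∫ y in closedAnnulus E (2 * ρ) r₀, -Δ u y
      ≤ ∫ y in closedAnnulus E (2 * ρ) r₀, 1000 * (annulusTest ρ r₀ r y * -Δ u y) := by
        refine setIntegral_mono_on (hΔu.continuousOn.integrableOn_compact hA) hint.integrableOn
          hA.measurableSet fun y hy => ?_
        have hΔ : 0 ≤ -Δ u y := neg_nonneg.2 (hu.laplacian_nonpos y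
          (mem_ball_sdiff_closedBall_zero.2 ⟨by linarith [hy.1], hy.2.trans_lt hr⟩))
        have hmul := mul_le_mul_of_nonneg_right (one_div_thousand_le_annulusTest hρ r hy) hΔ
        linarith
    _ ≤ ∫ y, 1000 * (annulusTest ρ r₀ r y * -Δ u y) :=
        setIntegral_le_integral hint (.of_forall fun y =>
          mul_nonneg (by norm_num) (annulusTest_mul_neg_laplacian_nonneg hρ hr₀ hr hu y))
    _ = 1000 * ∫ y, annulusTest ρ r₀ r y * -Δ u y := integral_const_mul _ _

lemma integral_neg_laplacian_annulusTest_mul_le {C : ℝ} (hρ : 0 < ρ) (hr₀ : 0 ≤ r₀) (hr : r₀ < r)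
    (hC : ∀ y : E, -Δ (annulusTest ρ r₀ r : E → ℝ) y ≤
      (closedAnnulus E r₀ r).indicator (fun _ => C) y)
    {u : E → ℝ} (hu : Continuous u) (hu_nonneg : ∀ y, 0 ≤ u y) :
    ∫ y, -Δ (annulusTest ρ r₀ r : E → ℝ) y * u y ≤ C * ∫ y in closedAnnulus E r₀ r, u y := by
  have hA := isCompact_closedAnnulus (E := E) r₀ r
  have hint : Integrable fun y => -Δ (annulusTest ρ r₀ r : E → ℝ) y * u y :=
    ((continuous_laplacian (contDiff_annulusTest hρ r₀ r)).neg.mul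
      hu).integrable_of_hasCompactSupport
        (hasCompactSupport_laplacian (hasCompactSupport_annulusTest hρ.le hr₀ hr)).neg.mul_right
  rw [← integral_const_mul, ← integral_indicator hA.measurableSet]
  refine integral_mono hint (((hu.const_smul C).continuousOn.integrableOn_compact
    hA).integrable_indicator hA.measurableSet) fun y => ?_
  calc -Δ (annulusTest ρ r₀ r : E → ℝ) y * u y
      ≤ (closedAnnulus E r₀ r).indicator (fun _ => C) y * u y :=
        mul_le_mul_of_nonneg_right (hC y) (hu_nonneg y)
    _ = (closedAnnulus E r₀ r).indicator (fun y => C * u y) y :=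
        (indicator_mul_left _ _ _).symm

lemma exists_setIntegral_neg_laplacian_le (hE : 3 ≤ finrank ℝ E) (hr₀ : 0 ≤ r₀) (hr : r₀ < r) :
    ∃ C, 0 ≤ C ∧ ∀ ρ, 0 < ρ → ∀ u : E → ℝ,
      NonnegSuperharmonicOn u (ball 0 r \ closedBall 0 (3 / 2 * ρ)) →
      ∫ y in closedAnnulus E (2 * ρ) r₀, -Δ u y ≤ C * ∫ y in closedAnnulus E r₀ r, u y := by
  obtain ⟨C, hC, hΔ_le⟩ := exists_neg_laplacian_annulusTest_le (E := E) hE hr₀ hr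
  refine ⟨1000 * C, by positivity, fun ρ hρ u hu => ?_⟩
  calc ∫ y in closedAnnulus E (2 * ρ) r₀, -Δ u y
      ≤ 1000 * ∫ y, annulusTest ρ r₀ r y * -Δ u y :=
        setIntegral_neg_laplacian_le_integral_annulusTest_mul hρ hr₀ hr hu
    _ = 1000 * ∫ y, -(Δ (annulusTest ρ r₀ r : E → ℝ)) y * u y := by
        simp only [mul_neg, neg_mul, integral_neg]
        rw [integral_mul_laplacian_comm (contDiff_annulusTest hρ r₀ r) hu.contDiff
          (hasCompactSupport_annulusTest hρ.le hr₀ hr)]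
    _ ≤ 1000 * (C * ∫ y in closedAnnulus E r₀ r, u y) := by
        gcongr
        exact integral_neg_laplacian_annulusTest_mul_le hρ hr₀ hr (hΔ_le ρ hρ)
          hu.contDiff.continuous hu.nonneg
    _ = 1000 * C * ∫ y in closedAnnulus E r₀ r, u y := (mul_assoc _ _ _).symm

lemma exists_setIntegral_neg_laplacian_le_mul (hE : 3 ≤ finrank ℝ E) (hr₀ : 0 < r₀) (hr : r₀ < r)
    (hR : r < R) :
    ∃ C, 0 ≤ C ∧ ∀ ρ, 0 < ρ → 2 * ρ < r₀ → ∀ u : E → ℝ,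
      NonnegSuperharmonicOn u (ball 0 R \ closedBall 0 (3 / 2 * ρ)) →
      ∀ x ∈ closedAnnulus E r₀ r, ∫ y in closedAnnulus E (2 * ρ) r₀, -Δ u y ≤ C * u x := by
  obtain ⟨A, hA, hgreen⟩ := exists_setIntegral_neg_laplacian_le (E := E) hE hr₀.le hr
  have hrank : 1 < Module.rank ℝ E := Module.lt_rank_of_lt_finrank (by omega)
  have hK_sub : closedAnnulus E r₀ r ⊆ ball 0 R \ closedBall 0 (3 / 4 * r₀) := fun y hy =>
    mem_ball_sdiff_closedBall_zero.2 ⟨by linarith [hy.1], hy.2.trans_lt hR⟩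
  obtain ⟨B, hB, hharnack⟩ := exists_setIntegral_le_mul_of_isCompact
    (isCompact_closedAnnulus r₀ r) (isPreconnected_closedAnnulus hrank hr₀ r)
    (isOpen_ball.sdiff isClosed_closedBall) hK_sub
  refine ⟨A * B, mul_nonneg hA hB, fun ρ hρ hρr₀ u hu x hx => ?_⟩
  calc ∫ y in closedAnnulus E (2 * ρ) r₀, -Δ u y
      ≤ A * ∫ y in closedAnnulus E r₀ r, u y :=
        hgreen ρ hρ u (hu.mono (sdiff_subset_sdiff_left (ball_subset_ball hR.le)))
    _ ≤ A * (B * u x) := mul_le_mul_of_nonneg_left (hharnack u (hu.mono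
        (sdiff_subset_sdiff_right (closedBall_subset_closedBall (by linarith)))) x hx) hA
    _ = A * B * u x := (mul_assoc A B _).symm

theorem annulus_min_principle_general (hE : 3 ≤ finrank ℝ E) (hr₀ : 0 < r₀) (hr : r₀ < r)
    (hR : r < R) :
    ∃ C : ℝ, 1 < C ∧ ∀ ρ : ℝ, 0 < ρ → 2 * ρ < r₀ → ∀ v f : E → ℝ,
      ContinuousOn v (closure (ball 0 R \ closedBall 0 ρ)) →
      ContDiffOn ℝ 2 v (ball 0 R \ closedBall 0 ρ) →
      (∀ x ∈ ball 0 R \ closedBall 0 ρ, -Δ v x = f x) →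
      (∀ x ∈ ball 0 R \ closedBall 0 ρ, 0 ≤ f x) →
      (∀ x ∈ frontier (ball 0 R \ closedBall 0 ρ), 0 ≤ v x) →
      ∀ x ∈ closedAnnulus E r₀ r, (1 / C) * ∫ y in closedAnnulus E (2 * ρ) r₀, f y ≤ v x := by
  obtain ⟨C, hC, hbound⟩ :=
    exists_setIntegral_neg_laplacian_le_mul (E := E) hE hr₀ hr (R := (r + R) / 2) (by linarith)
  refine ⟨C + 2, by linarith, fun ρ hρ hρr₀ v f hvc hv hvf hf hfr x hx => ?_⟩
  have : Nontrivial E := nontrivial_of_finrank_pos (R := ℝ) (by omega)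
  set Ω := ball (0 : E) R \ closedBall 0 ρ
  set K := closedAnnulus E (3 / 2 * ρ) ((r + R) / 2)
  have hΩ : IsOpen Ω := isOpen_ball.sdiff isClosed_closedBall
  have hKΩ : K ⊆ Ω := fun y hy =>
    mem_ball_sdiff_closedBall_zero.2 ⟨by linarith [hy.1], by linarith [hy.2]⟩
  have hΔ (y : E) (hy : y ∈ Ω) : Δ v y ≤ 0 := by linarith [hvf y hy, hf y hy]
  have hv_nonneg (y : E) (hy : y ∈ Ω) : 0 ≤ v y :=
    le_of_laplacian_nonpos hΩ (isBounded_ball.subset sdiff_subset) hvc hv hΔ hfr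
      (subset_closure hy)
  obtain ⟨u, hu, huv⟩ := exists_nonnegSuperharmonicOn_eventuallyEq hΩ
    (isCompact_closedAnnulus _ _).isClosed hKΩ hv hv_nonneg hΔ
  have hu' : NonnegSuperharmonicOn u (ball 0 ((r + R) / 2) \ closedBall 0 (3 / 2 * ρ)) :=
    hu.mono fun y hy => (mem_ball_sdiff_closedBall_zero.1 hy).imp le_of_lt le_of_lt
  have huf : ∫ y in closedAnnulus E (2 * ρ) r₀, f y =
      ∫ y in closedAnnulus E (2 * ρ) r₀, -Δ u y := by
    refine setIntegral_congr_fun (isCompact_closedAnnulus _ _).measurableSet fun y hy => ?_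
    have hyK : y ∈ K := ⟨by linarith [hy.1], by linarith [hy.2]⟩
    change f y = -Δ u y
    rw [← hvf y (hKΩ hyK),
      (laplacian_congr_nhds (eventually_nhdsSet_iff_forall.1 huv y hyK)).self_of_nhds]
  have hxK : x ∈ K := ⟨by linarith [hx.1], by linarith [hx.2]⟩
  rw [huf, one_div, inv_mul_le_iff₀ (by linarith), ← huv.self_of_nhdsSet hxK]
  exact (hbound ρ hρ hρr₀ u hu' x hx).trans
    (mul_le_mul_of_nonneg_right (by linarith) (hu.nonneg x))

end AnnulusEstimate

/-- quantitative minimum principle on the annulus `B_1 \ B_ρ`,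
uniform in the inner radius `ρ`. -/
theorem annulus_min_principle (n : ℕ) (hn : 3 ≤ n) (ρ₀ ρ₁ ρ₂ : ℝ)
    (h0 : 0 < ρ₀) (h01 : ρ₀ < ρ₁) (h12 : ρ₁ < ρ₂) (h21 : ρ₂ < 1) :
    ∃ C : ℝ, 1 < C ∧
      ∀ ρ : ℝ, 0 < ρ → 2 * ρ < ρ₀ →
        ∀ v f : EuclideanSpace ℝ (Fin n) → ℝ,
          ContDiffOn ℝ 2 v (closure (ball (0 : EuclideanSpace ℝ (Fin n)) 1 \ closedBall 0 ρ)) →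
          ContinuousOn f (closure (ball (0 : EuclideanSpace ℝ (Fin n)) 1 \ closedBall 0 ρ)) →
          (∀ x ∈ (ball (0 : EuclideanSpace ℝ (Fin n)) 1 \ closedBall 0 ρ), - lap v x = f x) →
          (∀ x ∈ (ball (0 : EuclideanSpace ℝ (Fin n)) 1 \ closedBall 0 ρ), 0 ≤ f x) →
          (∀ x ∈ frontier (ball (0 : EuclideanSpace ℝ (Fin n)) 1 \ closedBall 0 ρ), 0 ≤ v x) →
          ∀ x : EuclideanSpace ℝ (Fin n), ρ₁ ≤ ‖x‖ → ‖x‖ ≤ ρ₂ →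
            (1 / C) * ∫ y in {y : EuclideanSpace ℝ (Fin n) | 2 * ρ ≤ ‖y‖ ∧ ‖y‖ ≤ ρ₀}, f y
              ≤ v x := by
  have hE : 3 ≤ finrank ℝ (EuclideanSpace ℝ (Fin n)) := by rwa [finrank_euclideanSpace_fin]
  obtain ⟨C, hC, hbound⟩ := annulus_min_principle_general hE h0 (h01.trans h12) h21
  refine ⟨C, hC, fun ρ hρ hρρ₀ v f hv _ hvf hf hfr x hx₁ hx₂ => ?_⟩
  have hΩ : IsOpen (ball (0 : EuclideanSpace ℝ (Fin n)) 1 \ closedBall 0 ρ) :=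
    isOpen_ball.sdiff isClosed_closedBall
  have hv' := hv.mono subset_closure
  exact hbound ρ hρ hρρ₀ v f hv.continuousOn hv'
    (fun y hy => lap_eq_laplacian (hv'.contDiffAt (hΩ.mem_nhds hy)) ▸ hvf y hy) hf hfr x
    ⟨h01.le.trans hx₁, hx₂⟩
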